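/- Let r = p^m with p prime, let K = 𝔽_r((X)) with T := X⁻¹, let Ω be a fixed algebraic closure of K, let K^sep ⊆ Ω be the separable closure of K, let C_∞ be the completion of Ω with respect to the spectral norm, and let ι : Ω → C_∞ be the canonical embedding. Let t ≥ 1 and let N be a nilpotent t×t matrix with entries in C_∞. Then there exists a unique 𝔽_r-algebra homomorphism φ : K^sep → M_t(C_∞) such that (i) φ(T) = ι(T)·1 + N, (ii) the restriction of φ to K is continuous (where M_t(C_∞) carries the topology of entrywise convergence), and (iii) for every x ∈ K^sep the matrix φ(x) − ι(x)·1 is nilpotent. Moreover φ is injective. -/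

import Mathlib

set_option synthInstance.maxHeartbeats 1000000
set_option maxHeartbeats 1000000

/-- The element `T := X⁻¹` of `K = 𝔽_r((X))`, a uniformizer at the infinite place of
`𝔽_r(T)`. -/
noncomputable def laurentT (Fr : Type*) [Field Fr] : LaurentSeries Fr :=
  (HahnSeries.single (1 : ℤ) (1 : Fr))⁻¹

/-- The canonical algebra structure of `𝔽_r((X))` on an intermediate field of an extension
of `𝔽_r((X))` (registered explicitly to help typeclass inference). -/
noncomputable local instance laurentSeriesIntermediateFieldAlgebra (Fr : Type*) [Field Fr]
    (Ω : Type*) [Field Ω] [Algebra (LaurentSeries Fr) Ω]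
    (S : IntermediateField (LaurentSeries Fr) Ω) : Algebra (LaurentSeries Fr) S :=
  inferInstanceAs (Algebra (LaurentSeries Fr) S.toSubalgebra)

theorem Matrix.pow_eq_zero_of_isNilpotent {F : Type*} [Field F] {t n : ℕ}
    {M : Matrix (Fin t) (Fin t) F} (hM : IsNilpotent M) (hn : t ≤ n) : M ^ n = 0 := by
  have h := M.aeval_self_charpoly
  rw [sub_eq_zero.1 (Matrix.isNilpotent_charpoly_sub_pow_of_isNilpotent hM).eq_zero, map_pow,
    Polynomial.aeval_X, Fintype.card_fin] at h
  exact pow_eq_zero_of_le hn h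

/-- If `S` is generated by `T` over its `p ^ k`-th powers and `T` is not a `p`-th power, then a ring
homomorphism extending `ι` on `p ^ k`-th powers may send `T` to any `a` with the right power. -/
theorem exists_ringHom_of_adjoin_frobenius_eq_top {S C A : Type*} [Field S] [Field C] [Ring A]
    [Algebra C A] (p k : ℕ) [Fact p.Prime] [CharP S p] (ι : S →+* C) (T : S)
    (hgen : Algebra.adjoin (iterateFrobenius S p k).fieldRange {T} = ⊤)
    (hT : ∀ z : S, z ^ p ≠ T) (a : A) (ha : a ^ p ^ k = algebraMap C A (ι T) ^ p ^ k) :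
    ∃ φ : S →+* A, φ T = a ∧ ∀ x, φ (x ^ p ^ k) = algebraMap C A (ι (x ^ p ^ k)) := by
  set L := (iterateFrobenius S p k).fieldRange
  have mem (x : S) : x ^ p ^ k ∈ L := ⟨x, rfl⟩
  have : CharP L p := (algebraMap L S).charP (algebraMap L S).injective p
  let _ : Algebra L A := ((algebraMap C A).comp (ι.comp L.subtype)).toAlgebra'
    fun c x => Algebra.commutes _ x
  have halg (l : L) : algebraMap L A l = algebraMap C A (ι l) := rfl
  have hint : IsIntegral L T :=
    IsIntegral.of_pow (pow_pos (Fact.out : p.Prime).pos k)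
      (isIntegral_algebraMap (x := (⟨T ^ p ^ k, mem T⟩ : L)))
  let pb := PowerBasis.ofAdjoinEqTop' hint hgen
  have hpb : pb.gen = T := PowerBasis.ofAdjoinEqTop'_gen hint hgen
  obtain ⟨n, y, hy⟩ := (minpoly.natSepDegree_eq_one_iff_eq_X_pow_sub_C (F := L) (x := T) p).1
    ((minpoly.natSepDegree_eq_one_iff_pow_mem p).2 ⟨k, ⟨T ^ p ^ k, mem T⟩, rfl⟩)
  have hTy : T ^ p ^ n = y := by
    have h := minpoly.aeval L T
    rw [hy] at h
    rw [map_sub, map_pow, Polynomial.aeval_X, Polynomial.aeval_C, sub_eq_zero] at h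
    exact h
  have hkn : k ≤ n := by
    by_contra! hlt
    obtain ⟨z, hz⟩ := y.2
    obtain ⟨d, rfl⟩ := Nat.exists_eq_add_of_lt hlt
    refine hT (z ^ p ^ d) ?_
    apply (iterateFrobenius S p n).injective
    rw [iterateFrobenius_def, iterateFrobenius_def, hTy, ← hz, iterateFrobenius_def]
    ring
  have hroot : Polynomial.aeval a (minpoly L pb.gen) = 0 := by
    obtain ⟨d, rfl⟩ := Nat.exists_eq_add_of_le hkn
    rw [hpb, hy]
    simp only [map_sub, map_pow, Polynomial.aeval_X, Polynomial.aeval_C]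
    rw [halg, ← hTy, pow_add, pow_mul, ha, map_pow, map_pow, pow_mul, sub_self]
  refine ⟨(pb.lift a hroot : S →+* A), ?_, fun x => ?_⟩
  · have := pb.lift_gen a hroot
    rw [hpb] at this
    exact this
  · exact (pb.lift a hroot).commutes ⟨x ^ p ^ k, mem x⟩

/-- Ring homomorphisms agreeing on `p ^ k`-th powers and on a generator `T` over them are equal. -/
theorem ringHom_ext_of_adjoin_frobenius_eq_top {S A : Type*} [Field S] [Ring A]
    (p k : ℕ) [Fact p.Prime] [CharP S p] (T : S)
    (hgen : Algebra.adjoin (iterateFrobenius S p k).fieldRange {T} = ⊤)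
    {φ ψ : S →+* A} (hT : φ T = ψ T) (h : ∀ x, φ (x ^ p ^ k) = ψ (x ^ p ^ k)) : φ = ψ := by
  ext x
  have hx : x ∈ Algebra.adjoin (iterateFrobenius S p k).fieldRange {T} := hgen ▸ trivial
  induction hx using Algebra.adjoin_induction with
  | mem x hx => rw [Set.mem_singleton_iff.1 hx, hT]
  | algebraMap r => obtain ⟨_, y, rfl⟩ := r; exact h y
  | add x y _ _ hx hy => rw [map_add, map_add, hx, hy]
  | mul x y _ _ hx hy => rw [map_mul, map_mul, hx, hy]

/-- Over a perfect field, power series are spanned by `1, X, …, X ^ (p ^ k - 1)` over the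
`p ^ k`-th powers. -/
theorem PowerSeries.exists_eq_sum_X_pow_mul_pow {F : Type*} [Field F] (p k : ℕ) [Fact p.Prime]
    [CharP F p] [PerfectRing F p] (f : PowerSeries F) :
    ∃ g : ℕ → PowerSeries F,
      f = ∑ j ∈ Finset.range (p ^ k), PowerSeries.X ^ j * g j ^ p ^ k := by
  have hq : p ^ k ≠ 0 := pow_ne_zero _ (Fact.out : p.Prime).ne_zero
  refine ⟨fun j => PowerSeries.mk fun i =>
    (iterateFrobeniusEquiv F p k).symm (coeff (p ^ k * i + j) f), ?_⟩
  have hpow (g : PowerSeries F) :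
      g ^ p ^ k = PowerSeries.expand (p ^ k) hq (PowerSeries.map (iterateFrobenius F p k) g) := by
    rw [← PowerSeries.map_expand]
    exact (MvPowerSeries.map_iterateFrobenius_expand p (Fact.out : p.Prime).ne_zero g k).symm
  ext n
  rw [map_sum, Finset.sum_eq_single (n % p ^ k)]
  · have h1 : n = p ^ k * (n / p ^ k) + n % p ^ k := (Nat.div_add_mod n _).symm
    rw [hpow, PowerSeries.coeff_X_pow_mul', if_pos (Nat.mod_le _ _),
      show n - n % p ^ k = p ^ k * (n / p ^ k) by omega, PowerSeries.coeff_expand_mul,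
      PowerSeries.coeff_map, PowerSeries.coeff_mk, ← h1, ← coe_iterateFrobeniusEquiv,
      RingEquiv.apply_symm_apply]
  · intro j hj hne
    rw [hpow, PowerSeries.coeff_X_pow_mul', PowerSeries.coeff_expand]
    split_ifs with h1 h2
    · exfalso
      apply hne
      obtain ⟨c, hc⟩ := h2
      have : n = j + p ^ k * c := by omega
      rw [this, Nat.add_mul_mod_self_left, Nat.mod_eq_of_lt (Finset.mem_range.1 hj)]
    · rfl
    · rfl
  · intro h
    exact absurd (Finset.mem_range.2 (Nat.mod_lt _ (Nat.pos_of_ne_zero hq))) h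

open WithZero in
theorem LaurentSeries.mem_nhds_zero_iff {F : Type*} [Field F] {s : Set (LaurentSeries F)} :
    s ∈ nhds 0 ↔ ∃ n : ℤ, ∀ f : LaurentSeries F, Valued.v f ≤ exp (-n) → f ∈ s := by
  constructor
  · intro hs
    obtain ⟨γ, hγ⟩ := Valued.mem_nhds_zero.mp hs
    refine ⟨-(log (MonoidWithZeroHom.ValueGroup₀.embedding γ.1) - 1), fun f hf => hγ ?_⟩
    rw [Set.mem_ofPred_eq, Valuation.restrict_lt_iff_lt_embedding]
    refine lt_of_le_of_lt hf ?_
    rw [← lt_log_iff_exp_lt (by simp)]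
    simp
  · rintro ⟨n, hn⟩
    have hne : Valued.v.restrict (HahnSeries.single n (1 : F) : LaurentSeries F) ≠ 0 := by
      rw [Ne, Valuation.restrict_eq_zero_iff, LaurentSeries.valuation_single_zpow]
      simp
    refine Filter.mem_of_superset ((Valued.isOpen_closedBall _ hne).mem_nhds (by simp)) ?_
    intro f hf
    rw [Set.mem_ofPred_eq, Valuation.restrict_le_iff, LaurentSeries.valuation_single_zpow] at hf
    exact hn f hf

open WithZero in
theorem LaurentSeries.exists_valuation_le_eq_sum_single_pow_mul_pow {F : Type*} [Field F] (p k : ℕ) [Fact p.Prime]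
    [CharP F p] [PerfectRing F p] (n : ℤ) (f : LaurentSeries F)
    (hf : Valued.v f ≤ exp (-((p ^ k : ℕ) * n))) :
    ∃ g : ℕ → LaurentSeries F, (∀ j, Valued.v (g j) ≤ exp (-n)) ∧
      f = ∑ j ∈ Finset.range (p ^ k),
        (HahnSeries.single 1 1 : LaurentSeries F) ^ j * g j ^ p ^ k := by
  have hv : Valued.v (HahnSeries.single (-((p ^ k : ℕ) * n)) 1 * f) ≤ (1 : ℤᵐ⁰) := by
    rw [map_mul, LaurentSeries.valuation_single_zpow]
    calc exp (-(-((p ^ k : ℕ) * n))) * Valued.v f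
        ≤ exp (-(-((p ^ k : ℕ) * n))) * exp (-((p ^ k : ℕ) * n)) := by gcongr
      _ = 1 := by rw [← exp_add]; simp
  obtain ⟨P, hP⟩ := (LaurentSeries.val_le_one_iff_eq_coe F _).1 hv
  obtain ⟨G, hG⟩ := PowerSeries.exists_eq_sum_X_pow_mul_pow p k P
  refine ⟨fun j => HahnSeries.single n 1 * (G j : LaurentSeries F), fun j => ?_, ?_⟩
  · rw [map_mul, LaurentSeries.valuation_single_zpow]
    exact mul_le_of_le_one_right' ((LaurentSeries.val_le_one_iff_eq_coe F _).2 ⟨G j, rfl⟩)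
  · have hf' : f = HahnSeries.single ((p ^ k : ℕ) * n) 1 * (P : LaurentSeries F) := by
      rw [hP, ← mul_assoc, HahnSeries.single_mul_single, add_neg_cancel, one_mul]
      exact (one_mul f).symm
    rw [hf', hG, map_sum, Finset.mul_sum]
    refine Finset.sum_congr rfl fun j _ => ?_
    rw [map_mul, map_pow, map_pow, HahnSeries.ofPowerSeries_X, mul_pow, HahnSeries.single_pow n,
      nsmul_eq_mul, one_pow]
    ring

theorem LaurentSeries.exists_eq_sum_single_pow_mul_pow {F : Type*} [Field F] (p k : ℕ)
    [Fact p.Prime] [CharP F p] [PerfectRing F p] (f : LaurentSeries F) :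
    ∃ g : ℕ → LaurentSeries F, f = ∑ j ∈ Finset.range (p ^ k),
        (HahnSeries.single 1 1 : LaurentSeries F) ^ j * g j ^ p ^ k := by
  obtain ⟨g, -, hg⟩ := LaurentSeries.exists_valuation_le_eq_sum_single_pow_mul_pow p k (-|f.order|) f <| by
    rw [LaurentSeries.valuation_le_iff_coeff_lt_eq_zero]
    refine fun n hn => HahnSeries.coeff_eq_zero_of_lt_order (hn.trans_le ?_)
    have h1 : (1 : ℤ) ≤ (p ^ k : ℕ) := by
      exact_mod_cast Nat.one_le_pow _ _ (Fact.out : p.Prime).pos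
    nlinarith [neg_abs_le f.order, abs_nonneg f.order]
  exact ⟨g, hg⟩

/-- A ring homomorphism agreeing with a continuous one on `p ^ k`-th powers is continuous. -/
theorem LaurentSeries.continuous_of_map_pow_eq {F A : Type*} [Field F] (p k : ℕ) [Fact p.Prime]
    [CharP F p] [PerfectRing F p] [Ring A] [TopologicalSpace A] [IsTopologicalRing A]
    (σ ψ : LaurentSeries F →+* A) (hσ : Continuous σ)
    (h : ∀ x, ψ (x ^ p ^ k) = σ (x ^ p ^ k)) : Continuous ψ := by
  refine continuous_of_continuousAt_zero ψ ?_
  intro V hV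
  rw [map_zero] at hV
  let H : (ℕ → A) → A := fun c =>
    ∑ j ∈ Finset.range (p ^ k), ψ (HahnSeries.single 1 1) ^ j * c j ^ p ^ k
  have hH : Continuous H := by fun_prop
  have hH0 : H 0 = 0 := by
    simp [H, zero_pow (pow_ne_zero k (Fact.out : p.Prime).ne_zero)]
  have hHV : H ⁻¹' V ∈ nhds 0 := hH.continuousAt.preimage_mem_nhds (by rwa [hH0])
  rw [nhds_pi, Filter.mem_pi] at hHV
  obtain ⟨I, hI, W, hW, hWV⟩ := hHV
  have hWI : (⋂ i ∈ I, W i) ∈ nhds (0 : A) := (Filter.biInter_mem hI).2 fun i _ => hW i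
  have hσW : σ ⁻¹' (⋂ i ∈ I, W i) ∈ nhds 0 :=
    hσ.continuousAt.preimage_mem_nhds (by rwa [map_zero])
  obtain ⟨n, hn⟩ := LaurentSeries.mem_nhds_zero_iff.1 hσW
  refine LaurentSeries.mem_nhds_zero_iff.2 ⟨(p ^ k : ℕ) * n, fun f hf => ?_⟩
  obtain ⟨g, hg, hfg⟩ := LaurentSeries.exists_valuation_le_eq_sum_single_pow_mul_pow p k n f hf
  have hψ : ψ f = H fun j => σ (g j) := by
    rw [hfg, map_sum]
    refine Finset.sum_congr rfl fun j _ => ?_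
    rw [map_mul, map_pow, h, map_pow]
  rw [Set.mem_preimage, hψ]
  exact hWV fun i hi => Set.mem_iInter₂.1 (hn _ (hg i)) i hi

theorem LaurentSeries.pow_ne_single_one_inv {F : Type*} [Field F] {p : ℕ} (hp : p ≠ 1)
    (z : LaurentSeries F) : z ^ p ≠ (HahnSeries.single 1 1 : LaurentSeries F)⁻¹ := by
  intro h
  have h1 := congrArg HahnSeries.order h
  rw [HahnSeries.inv_single, HahnSeries.order_pow, HahnSeries.order_single (by simp),
    nsmul_eq_mul] at h1
  have h2 : (p : ℤ) ∣ 1 := ⟨-z.order, by linarith⟩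
  exact hp (by exact_mod_cast Int.eq_one_of_dvd_one (by positivity) h2)

section Separable

variable {F S : Type*} [Field F] [Field S] [Algebra (LaurentSeries F) S]
  [Algebra.IsSeparable (LaurentSeries F) S] (p : ℕ) [Fact p.Prime] [CharP F p]

theorem LaurentSeries.pow_ne_algebraMap_single_one_inv (z : S) :
    z ^ p ≠ algebraMap (LaurentSeries F) S (HahnSeries.single 1 1)⁻¹ := by
  intro h
  have : CharP (LaurentSeries F) p :=
    charP_of_injective_algebraMap (algebraMap F (LaurentSeries F)).injective p
  have hz := IntermediateField.mem_adjoin_simple_self (LaurentSeries F) z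
  rw [IntermediateField.adjoin_simple_eq_adjoin_pow_expChar_of_isSeparable' (LaurentSeries F) S z p,
    h, IntermediateField.adjoin_simple_eq_bot_iff.2 (algebraMap_mem _ _),
    IntermediateField.mem_bot] at hz
  obtain ⟨w, rfl⟩ := hz
  rw [← map_pow] at h
  exact LaurentSeries.pow_ne_single_one_inv (Fact.out : p.Prime).ne_one w
    ((algebraMap (LaurentSeries F) S).injective h)

/-- A separable extension of `F((X))`, with `F` perfect, is generated by `X⁻¹` over its
`p ^ k`-th powers. -/
theorem LaurentSeries.adjoin_frobenius_eq_top [PerfectRing F p] [CharP S p] (k : ℕ) :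
    Algebra.adjoin (iterateFrobenius S p k).fieldRange
      {algebraMap (LaurentSeries F) S (HahnSeries.single 1 1)⁻¹} = ⊤ := by
  have : CharP (LaurentSeries F) p :=
    charP_of_injective_algebraMap (algebraMap F (LaurentSeries F)).injective p
  set R := Algebra.adjoin (iterateFrobenius S p k).fieldRange
      {algebraMap (LaurentSeries F) S (HahnSeries.single 1 1)⁻¹}
  have hpow (x : S) : x ^ p ^ k ∈ R := R.algebraMap_mem ⟨x ^ p ^ k, x, rfl⟩
  have hT : algebraMap (LaurentSeries F) S (HahnSeries.single 1 1)⁻¹ ∈ R :=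
    Algebra.subset_adjoin rfl
  have hX : algebraMap (LaurentSeries F) S (HahnSeries.single 1 1) ∈ R := by
    have h0 : algebraMap (LaurentSeries F) S (HahnSeries.single 1 1) ≠ 0 := by simp
    obtain ⟨d, hd⟩ := Nat.exists_eq_succ_of_ne_zero
      (pow_ne_zero k (Fact.out : p.Prime).ne_zero)
    have := R.mul_mem (hpow (algebraMap (LaurentSeries F) S (HahnSeries.single 1 1)))
      (R.pow_mem hT d)
    rw [hd, pow_succ', map_inv₀, mul_assoc, ← mul_pow, mul_inv_cancel₀ h0, one_pow, mul_one] at this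
    exact this
  have hK (f : LaurentSeries F) : algebraMap (LaurentSeries F) S f ∈ R := by
    obtain ⟨g, hg⟩ := LaurentSeries.exists_eq_sum_single_pow_mul_pow p k f
    rw [hg, map_sum]
    refine R.sum_mem fun j _ => ?_
    rw [map_mul, map_pow, map_pow]
    exact R.mul_mem (R.pow_mem hX j) (hpow _)
  rw [eq_top_iff]
  rintro x -
  have hx := IntermediateField.mem_adjoin_simple_self (LaurentSeries F) x
  rw [IntermediateField.adjoin_simple_eq_adjoin_pow_expChar_pow_of_isSeparable'
    (LaurentSeries F) S x p k, ← IntermediateField.mem_toSubalgebra,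
    IntermediateField.adjoin_simple_toSubalgebra_of_isAlgebraic
      (Algebra.IsAlgebraic.isAlgebraic _)] at hx
  have hy : x ^ p ^ k ∈ R := hpow x
  generalize x ^ p ^ k = y at hx hy
  induction hx using Algebra.adjoin_induction with
  | mem z hz => rwa [Set.mem_singleton_iff.1 hz]
  | algebraMap r => exact hK r
  | add _ _ _ _ ha hb => exact R.add_mem ha hb
  | mul _ _ _ _ ha hb => exact R.mul_mem ha hb

end Separable

/-- given a nilpotent `t×t` matrix `N` over `C_∞`, there is exactly one
`𝔽_r`-algebra homomorphism `φ : K^sep → M_t(C_∞)` with `φ(T) = ι(T)·1 + N`, whose restriction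
to `K` is continuous, and all of whose values have the form `ι(x)·1 + (nilpotent)`; moreover
`φ` is injective. -/
theorem stmt_8 (p m : ℕ) [Fact p.Prime] (hm : 0 < m)
    (Fr : Type*) [Field Fr] [Fintype Fr] (hcard : Fintype.card Fr = p ^ m)
    (Ω : Type*) [Field Ω] [Algebra (LaurentSeries Fr) Ω] [IsAlgClosure (LaurentSeries Fr) Ω]
    [Algebra Fr Ω] [IsScalarTower Fr (LaurentSeries Fr) Ω]
    (C : Type*) [NormedField C] [CompleteSpace C] [IsAlgClosed C] [IsUltrametricDist C]
    [Algebra Ω C] [Algebra (LaurentSeries Fr) C] [IsScalarTower (LaurentSeries Fr) Ω C]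
    [Algebra Fr C] [IsScalarTower Fr Ω C]
    (hι : Continuous (algebraMap (LaurentSeries Fr) C))
    (t : ℕ) (ht : 1 ≤ t) (N : Matrix (Fin t) (Fin t) C) (hN : IsNilpotent N) :
    (∃! φ : separableClosure (LaurentSeries Fr) Ω →ₐ[Fr] Matrix (Fin t) (Fin t) C,
        φ (algebraMap (LaurentSeries Fr) (separableClosure (LaurentSeries Fr) Ω)
            (laurentT Fr)) =
          algebraMap C (Matrix (Fin t) (Fin t) C) (algebraMap (LaurentSeries Fr) C
            (laurentT Fr)) + N ∧
        Continuous (fun x : LaurentSeries Fr =>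
          φ (algebraMap (LaurentSeries Fr) (separableClosure (LaurentSeries Fr) Ω) x)) ∧
        ∀ x : separableClosure (LaurentSeries Fr) Ω,
          IsNilpotent (φ x -
            algebraMap C (Matrix (Fin t) (Fin t) C) (algebraMap Ω C (x : Ω)))) ∧
    ∀ φ : separableClosure (LaurentSeries Fr) Ω →ₐ[Fr] Matrix (Fin t) (Fin t) C,
      (φ (algebraMap (LaurentSeries Fr) (separableClosure (LaurentSeries Fr) Ω)
            (laurentT Fr)) =
          algebraMap C (Matrix (Fin t) (Fin t) C) (algebraMap (LaurentSeries Fr) C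
            (laurentT Fr)) + N ∧
        Continuous (fun x : LaurentSeries Fr =>
          φ (algebraMap (LaurentSeries Fr) (separableClosure (LaurentSeries Fr) Ω) x)) ∧
        ∀ x : separableClosure (LaurentSeries Fr) Ω,
          IsNilpotent (φ x -
            algebraMap C (Matrix (Fin t) (Fin t) C) (algebraMap Ω C (x : Ω)))) →
      Function.Injective φ := by
  have hcharF : CharP Fr p := charP_of_card_eq_prime_pow hcard
  have hcharS : CharP (separableClosure (LaurentSeries Fr) Ω) p :=
    charP_of_injective_algebraMap
      (algebraMap Fr (separableClosure (LaurentSeries Fr) Ω)).injective p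
  have hne : Nonempty (Fin t) := ⟨⟨0, ht⟩⟩
  have hcharC : CharP C p := charP_of_injective_algebraMap (algebraMap Fr C).injective p
  have hsep : Algebra.IsSeparable (LaurentSeries Fr) (separableClosure (LaurentSeries Fr) Ω) :=
    separableClosure.isSeparable (LaurentSeries Fr) Ω
  have htq : t ≤ p ^ t := (Nat.lt_pow_self (Fact.out : p.Prime).one_lt).le
  let ι : separableClosure (LaurentSeries Fr) Ω →+* C :=
    (algebraMap Ω C).comp (separableClosure (LaurentSeries Fr) Ω).val.toRingHom
  have hιK (x : LaurentSeries Fr) :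
      ι (algebraMap (LaurentSeries Fr) (separableClosure (LaurentSeries Fr) Ω) x) =
        algebraMap (LaurentSeries Fr) C x :=
    (IsScalarTower.algebraMap_apply (LaurentSeries Fr) Ω C x).symm
  have hgen := LaurentSeries.adjoin_frobenius_eq_top (F := Fr)
    (S := separableClosure (LaurentSeries Fr) Ω) p t
  have hnil {M : Matrix (Fin t) (Fin t) C} (c : C)
      (h : IsNilpotent (M - algebraMap C (Matrix (Fin t) (Fin t) C) c)) :
      M ^ p ^ t = algebraMap C (Matrix (Fin t) (Fin t) C) c ^ p ^ t := by
    have h0 := Matrix.pow_eq_zero_of_isNilpotent h htq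
    rwa [sub_pow_expChar_pow_of_commute p t (Algebra.commutes c M).symm, sub_eq_zero] at h0
  refine ⟨existsUnique_of_exists_of_unique ?_ ?_, ?_⟩
  · obtain ⟨φ, hφT, hφ⟩ := exists_ringHom_of_adjoin_frobenius_eq_top p t ι _ hgen
      (LaurentSeries.pow_ne_algebraMap_single_one_inv p)
      (algebraMap C (Matrix (Fin t) (Fin t) C) (algebraMap (LaurentSeries Fr) C
            (laurentT Fr)) + N) (by
        rw [hιK]
        exact hnil _ (by simpa [laurentT] using hN))
    refine ⟨{ φ with commutes' := fun c => ?_ }, hφT, ?_, fun x => ?_⟩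
    · obtain ⟨d, rfl⟩ := (iterateFrobeniusEquiv Fr p t).surjective c
      rw [iterateFrobeniusEquiv_def, map_pow]
      refine (hφ _).trans ?_
      rw [← map_pow]
      change algebraMap C _ (algebraMap Ω C (algebraMap Fr Ω (d ^ p ^ t))) = _
      rw [← IsScalarTower.algebraMap_apply Fr Ω C]
      exact (IsScalarTower.algebraMap_apply Fr C (Matrix (Fin t) (Fin t) C) _).symm
    · refine LaurentSeries.continuous_of_map_pow_eq p t
        ((algebraMap C (Matrix (Fin t) (Fin t) C)).comp (algebraMap (LaurentSeries Fr) C))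
        (φ.comp (algebraMap (LaurentSeries Fr) (separableClosure (LaurentSeries Fr) Ω)))
        ?_ fun x => ?_
      · exact (continuous_algebraMap C (Matrix (Fin t) (Fin t) C)).comp hι
      · simp only [RingHom.comp_apply]
        rw [map_pow, hφ, ← map_pow, hιK]
    · refine ⟨p ^ t, ?_⟩
      rw [sub_pow_expChar_pow_of_commute p t (Algebra.commutes _ _).symm, sub_eq_zero]
      refine (map_pow φ x _).symm.trans ((hφ x).trans ?_)
      rw [map_pow, map_pow]
      rfl
  · rintro φ ψ ⟨hφT, -, hφ⟩ ⟨hψT, -, hψ⟩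
    have h : (φ : separableClosure (LaurentSeries Fr) Ω →+* Matrix (Fin t) (Fin t) C) = ψ := by
      refine ringHom_ext_of_adjoin_frobenius_eq_top p t _ hgen (hφT.trans hψT.symm) fun x => ?_
      rw [map_pow, map_pow]
      exact (hnil _ (hφ x)).trans (hnil _ (hψ x)).symm
    exact AlgHom.coe_ringHom_injective h
  · rintro φ -
    exact φ.toRingHom.injective
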